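/- Under the token perturbation z_n(ε) = z_n + ε α_n u*, the residual vector r_k(ε) = Σ_{n=1}^N q_{nk}(ε) (p_k − μ_n(ε)) is differentiable in ε and its derivative at ε = 0 equals (2/T) Σ_{n=1}^N α_n [ q_{nk} (p_k* − p̄_n*) (p_k − μ_n) − q_{nk} Σ_{k'=1}^K q_{nk'} (p_{k'}* − p̄_n*) p_{k'} ], where p_k* = ⟨p_k, u*⟩, p̄_n* = Σ_{k'} q_{nk'} p_{k'}*, and μ_n = Σ_{k'} q_{nk'} p_{k'}. -/

import Mathlib

/-!
The assignments `q n ·` are a softmax of the logits `-‖z n (ε) - p k‖² / T`, so everything rests on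
the softmax rule `s_k' = s_k (w_k' - ∑ j, s_j w_j')` (`hasDerivAt_softmax`). At `ε = 0` the logit
derivatives are `(2 α n / T) (⟪p k, u*⟫ - ⟪z n, u*⟫)` (`hasDerivAt_logit`). The term involving
`z n` does not depend on `k`, so it cancels because the softmax weights sum to `1`, and the
derivative of `q n k` is `(2 α n / T) q n k (p_k* - p̄_n*)` (`hasDerivAt_assignment`). The formula
for the residual is then the product rule.
-/

open scoped RealInnerProductSpace

/-- The weights `exp (w k) / ∑ j, exp (w j)` evolve by the deviation of the logit derivative from
its weighted mean. -/
lemma hasDerivAt_softmax {ι : Type*} [Fintype ι] (w : ι → ℝ → ℝ) (w' : ι → ℝ) (x : ℝ)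
    (hw : ∀ j, HasDerivAt (w j) (w' j) x) (k : ι) :
    HasDerivAt (fun t => Real.exp (w k t) / ∑ j, Real.exp (w j t))
      (Real.exp (w k x) / (∑ j, Real.exp (w j x)) *
        (w' k - ∑ j, Real.exp (w j x) / (∑ i, Real.exp (w i x)) * w' j)) x := by
  have hpos : 0 < ∑ j, Real.exp (w j x) :=
    Finset.sum_pos (fun j _ => Real.exp_pos _) ⟨k, Finset.mem_univ k⟩
  have hsum : HasDerivAt (fun t => ∑ j, Real.exp (w j t)) (∑ j, Real.exp (w j x) * w' j) x :=
    HasDerivAt.fun_sum fun j _ => (hw j).exp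
  refine ((hw k).exp.fun_div hsum hpos.ne').congr_deriv ?_
  have hmean : ∑ j, Real.exp (w j x) / (∑ i, Real.exp (w i x)) * w' j
      = (∑ j, Real.exp (w j x) * w' j) / ∑ i, Real.exp (w i x) := by
    rw [Finset.sum_div]
    exact Finset.sum_congr rfl fun j _ => by ring
  rw [hmean]
  field_simp

lemma hasDerivAt_logit {E : Type*} [NormedAddCommGroup E] [InnerProductSpace ℝ E]
    (z p u : E) (a T : ℝ) :
    HasDerivAt (fun t : ℝ => -‖(z + (t * a) • u) - p‖ ^ 2 / T)
      (2 * a / T * (⟪p, u⟫ - ⟪z, u⟫)) 0 := by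
  have h : HasDerivAt (fun t : ℝ => (z + (t * a) • u) - p) (a • u) 0 := by
    simpa using ((((hasDerivAt_id (0 : ℝ)).mul_const a).smul_const u).const_add z).sub_const p
  refine (h.norm_sq.fun_neg.div_const T).congr_deriv ?_
  simp only [zero_mul, zero_smul, add_zero, inner_smul_right, inner_sub_left]
  ring

/-- The derivative of a soft assignment involves the token only through its weights: the common
logit drift `⟪z, u⟫` cancels since the weights sum to `1`. -/
lemma hasDerivAt_assignment {ι E : Type*} [Fintype ι] [NormedAddCommGroup E]
    [InnerProductSpace ℝ E] (p : ι → E) (z u : E) (a T : ℝ) (q : ι → ℝ → ℝ)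
    (hq : ∀ k t, q k t = Real.exp (-‖(z + (t * a) • u) - p k‖ ^ 2 / T) /
      ∑ j, Real.exp (-‖(z + (t * a) • u) - p j‖ ^ 2 / T)) (k : ι) :
    HasDerivAt (q k) (2 * a / T * (q k 0 * (⟪p k, u⟫ - ∑ j, q j 0 * ⟪p j, u⟫))) 0 := by
  have h := hasDerivAt_softmax _ _ 0 (fun j => hasDerivAt_logit z (p j) u a T) k
  simp only [← hq] at h
  refine h.congr_deriv ?_
  have hone : ∑ j, q j 0 = 1 := by
    simp only [hq, ← Finset.sum_div]
    exact div_self (Finset.sum_pos (fun j _ => Real.exp_pos _) ⟨k, Finset.mem_univ k⟩).ne'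
  have hmean : ∑ j, q j 0 * (2 * a / T * (⟪p j, u⟫ - ⟪z, u⟫))
      = 2 * a / T * (∑ j, q j 0 * ⟪p j, u⟫ - (∑ j, q j 0) * ⟪z, u⟫) := by
    simp only [Finset.sum_mul, ← Finset.sum_sub_distrib, Finset.mul_sum]
    exact Finset.sum_congr rfl fun j _ => by ring
  rw [hmean, hone]
  ring

/-- Under the token perturbation `z n (ε) = z n + ε α n u*`,
the residual vector `r k (ε) = ∑ n, q n k (ε) • (p k − μ n (ε))` is
differentiable in `ε` with derivative at `ε = 0` equal to
`(2/T) • ∑ n, α n • [ q n k (p_k* − p̄_n*) • (p k − μ n)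
                      − q n k • ∑ k', (q n k' (p_{k'}* − p̄_n*)) • p k' ]`,
where `p_k* = ⟪p k, u*⟫`, `p̄_n* = ∑ k', q n k' * p_{k'}*`, and
`μ n = ∑ k', q n k' • p k'`, all evaluated at `ε = 0`. -/
theorem residual_vector_perturbation_deriv
    {E : Type*} [NormedAddCommGroup E] [InnerProductSpace ℝ E]
    (K N : ℕ) (p : Fin K → E) (z : Fin N → E) (T : ℝ) (hT : 0 < T)
    (α : Fin N → ℝ) (uStar : E)
    (qε : Fin N → Fin K → ℝ → ℝ)
    (hqε : ∀ n k ε, qε n k ε =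
      Real.exp (-‖(z n + (ε * α n) • uStar) - p k‖ ^ 2 / T) /
        ∑ k', Real.exp (-‖(z n + (ε * α n) • uStar) - p k'‖ ^ 2 / T))
    (με : Fin N → ℝ → E)
    (hμε : ∀ n ε, με n ε = ∑ k', qε n k' ε • p k')
    (pStar : Fin K → ℝ) (hpStar : ∀ k, pStar k = ⟪p k, uStar⟫)
    (pBar : Fin N → ℝ) (hpBar : ∀ n, pBar n = ∑ k', qε n k' 0 * pStar k')
    (r : Fin K → ℝ → E)
    (hr : ∀ k ε, r k ε = ∑ n, qε n k ε • (p k - με n ε))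
    (k : Fin K) :
    HasDerivAt (r k)
      ((2 / T) • ∑ n, α n •
        ((qε n k 0 * (pStar k - pBar n)) • (p k - με n 0)
          - qε n k 0 • ∑ k', (qε n k' 0 * (pStar k' - pBar n)) • p k'))
      0 := by
  have hq : ∀ n j, HasDerivAt (qε n j) (2 * α n / T * (qε n j 0 * (pStar j - pBar n))) 0 := by
    intro n j
    simpa only [hpBar, hpStar] using
      hasDerivAt_assignment p (z n) uStar (α n) T (qε n) (hqε n) j
  have hμ : ∀ n, HasDerivAt (με n)
      ((2 * α n / T) • ∑ j, (qε n j 0 * (pStar j - pBar n)) • p j) 0 := by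
    intro n
    have h : HasDerivAt (fun t => ∑ j, qε n j t • p j)
        (∑ j, (2 * α n / T * (qε n j 0 * (pStar j - pBar n))) • p j) 0 :=
      HasDerivAt.fun_sum fun j _ => (hq n j).smul_const (p j)
    simpa only [← hμε, mul_smul _ (_ * _), ← Finset.smul_sum] using h
  have hr' : HasDerivAt (fun t => ∑ n, qε n k t • (p k - με n t)) _ 0 :=
    HasDerivAt.fun_sum fun n _ => (hq n k).fun_smul ((hμ n).const_sub (p k))
  simp only [← hr] at hr'
  refine hr'.congr_deriv ?_
  rw [Finset.smul_sum]
  refine Finset.sum_congr rfl fun n _ => ?_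
  module
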